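/- arXiv:2211.15251 — 3 statements merged into one kernel-verified Lean document; each statement's English description precedes it below -/
import Mathlib

section
/- Let A ∈ ℝ^{M×N}, let L = λ_max(AᵀA), let 0 < η < 1/L, and define W_n = Σ_{i=1}^{n} C(n,i)(−1)^{i−1}(η AᵀA)^{i−1}. Then W_n is symmetric positive definite and every eigenvalue of W_n is at most n; in particular λ_max(W_n) ≤ n. -/
open Matrix Finset

lemma aux_sum {N : ℕ} (B : Matrix (Fin N) (Fin N) ℝ) (n : ℕ) :
    ∑ i ∈ Finset.range n, ((n.choose (i+1) : ℝ) * (-1) ^ i) • B ^ i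
      = ∑ k ∈ Finset.range n, (1 - B) ^ k := by
  induction n with
  | zero => simp
  | succ n ih =>
    rw [Finset.sum_range_succ (fun k => (1 - B) ^ k), ← ih]
    have h1 : (1 - B) ^ n = ∑ i ∈ Finset.range (n+1), ((n.choose i : ℝ) * (-1) ^ i) • B ^ i := by
      have : (1 - B) = (-B) + 1 := by abel
      rw [this, (Commute.one_right (-B)).add_pow]
      refine Finset.sum_congr rfl fun i _ => ?_
      have e : (-B) ^ i = ((-1 : ℝ) ^ i) • B ^ i := by
        rw [← smul_pow]; simp
      rw [e, one_pow, mul_one, ← nsmul_eq_mul', mul_smul, ← Nat.cast_smul_eq_nsmul ℝ]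
    have h2 : ∑ i ∈ Finset.range n, ((n.choose (i+1) : ℝ) * (-1) ^ i) • B ^ i
        = ∑ i ∈ Finset.range (n+1), ((n.choose (i+1) : ℝ) * (-1) ^ i) • B ^ i := by
      rw [Finset.sum_range_succ]; simp
    rw [h1, h2, ← Finset.sum_add_distrib]
    refine Finset.sum_congr rfl fun i _ => ?_
    rw [← add_smul, Nat.choose_succ_succ]
    push_cast
    congr 1
    ring

lemma aux_psd {N : ℕ} (B C : Matrix (Fin N) (Fin N) ℝ) (hB : B.PosSemidef) (hC : C.PosSemidef)
    (h : C + B = 1) : ∀ k : ℕ, (C ^ k * B).PosSemidef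
  | 0 => by simpa using hB
  | 1 => by
    have e : C = 1 - B := by rw [← h]; abel
    have : C ^ 1 * B = C * B * Cᴴ + B * C * Bᴴ := by
      rw [hC.1.eq, hB.1.eq, e]; noncomm_ring
    rw [this]
    exact (hB.mul_mul_conjTranspose_same C).add (hC.mul_mul_conjTranspose_same B)
  | k + 2 => by
    have e : B = 1 - C := by rw [← h]; abel
    have : C ^ (k+2) * B = C * (C ^ k * B) * Cᴴ := by
      rw [hC.1.eq, e, pow_add]
      simp only [mul_sub, sub_mul, mul_one, ← pow_succ, ← pow_succ', ← pow_add]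
    rw [this]
    exact (aux_psd B C hB hC h k).mul_mul_conjTranspose_same C

lemma aux_one_sub {N : ℕ} (B C : Matrix (Fin N) (Fin N) ℝ) (hB : B.PosSemidef)
    (hC : C.PosSemidef) (h : C + B = 1) (k : ℕ) : (1 - C ^ k).PosSemidef := by
  induction k with
  | zero => simpa using PosSemidef.zero
  | succ k ih =>
    have e : B = 1 - C := by rw [← h]; abel
    have : 1 - C ^ (k+1) = (1 - C ^ k) + C ^ k * B := by
      rw [e, mul_sub, pow_succ]; simp
    rw [this]
    exact ih.add (aux_psd B C hB hC h k)

lemma aux_C {N : ℕ} (G : Matrix (Fin N) (Fin N) ℝ) (hG : G.IsHermitian) (η : ℝ)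
    (h : ∀ i, η * hG.eigenvalues i ≤ 1) : (1 - η • G).PosSemidef := by
  have hs := hG.spectral_theorem
  rw [Unitary.conjStarAlgAut_apply] at hs
  set U : Matrix (Fin N) (Fin N) ℝ := (hG.eigenvectorUnitary : Matrix (Fin N) (Fin N) ℝ) with hU
  have hUU : U * star U = 1 := Unitary.coe_mul_star_self _
  have : 1 - η • G = U * (diagonal fun i => 1 - η * hG.eigenvalues i) * Uᴴ := by
    have d : (diagonal fun i => 1 - η * hG.eigenvalues i)
        = 1 - η • diagonal (RCLike.ofReal ∘ hG.eigenvalues : Fin N → ℝ) := by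
      ext i j
      by_cases hij : i = j
      · subst hij; simp
      · simp [hij]
    rw [d, mul_sub, sub_mul, mul_one, ← star_eq_conjTranspose, hUU]
    simp only [mul_smul_comm, smul_mul_assoc]
    rw [← hs]
  rw [this]
  refine PosSemidef.mul_mul_conjTranspose_same (PosSemidef.diagonal ?_) U
  intro i
  simpa using h i

/-- For `0 < η < 1/λ_max(AᵀA)` and `n ≥ 1`, the weighting matrix
`W_n = ∑_{i=1}^n C(n,i) (-1)^{i-1} (η AᵀA)^{i-1}` is symmetric positive definite and
every eigenvalue of `W_n` is at most `n`; in particular `λ_max(W_n) ≤ n`. -/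
theorem stmt4 {M N : ℕ} (A : Matrix (Fin M) (Fin N) ℝ) (η L : ℝ)
    (hG : (Aᵀ * A).IsHermitian)
    (hL : L = ⨆ i, hG.eigenvalues i)
    (hη0 : 0 < η) (hη1 : η < 1 / L)
    (n : ℕ) (hn : 1 ≤ n) :
    (∑ i ∈ Finset.Icc 1 n,
        ((n.choose i : ℝ) * (-1) ^ (i - 1)) • (η • (Aᵀ * A)) ^ (i - 1)).PosDef
    ∧ ∀ (hW : (∑ i ∈ Finset.Icc 1 n,
        ((n.choose i : ℝ) * (-1) ^ (i - 1)) • (η • (Aᵀ * A)) ^ (i - 1)).IsHermitian)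
        (j : Fin N), hW.eigenvalues j ≤ (n : ℝ) := by

  have hLpos : 0 < L := by
    by_contra hc
    have : 1 / L ≤ 0 := one_div_nonpos.mpr (not_lt.mp hc)
    linarith
  have hle : ∀ i, η * hG.eigenvalues i ≤ 1 := by
    intro i
    have h1 : hG.eigenvalues i ≤ L := by
      rw [hL]; exact le_ciSup (Set.finite_range _).bddAbove i
    have h2 : η * L < 1 := (lt_div_iff₀ hLpos).mp hη1
    nlinarith
  have hC := aux_C _ hG η hle
  have hB : (η • (Aᵀ * A)).PosSemidef := by
    have : (Aᵀ * A).PosSemidef := by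
      simpa using posSemidef_conjTranspose_mul_self A
    exact this.smul hη0.le
  have hW : ∑ i ∈ Finset.Icc 1 n,
        ((n.choose i : ℝ) * (-1) ^ (i - 1)) • (η • (Aᵀ * A)) ^ (i - 1)
      = ∑ k ∈ Finset.range n, (1 - η • (Aᵀ * A)) ^ k := by
    rw [← aux_sum, ← Finset.Ico_add_one_right_eq_Icc, Finset.sum_Ico_eq_sum_range]
    refine Finset.sum_congr (by simp) fun i _ => ?_
    simp [add_comm 1 i]
  rw [hW]
  set C := 1 - η • (Aᵀ * A) with hCdef
  have hCB : C + η • (Aᵀ * A) = 1 := by rw [hCdef]; abel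
  constructor
  · obtain ⟨m, rfl⟩ : ∃ m, n = m + 1 := ⟨n - 1, by omega⟩
    rw [Finset.sum_range_succ']
    rw [pow_zero]
    exact PosDef.posSemidef_add (posSemidef_sum _ fun k _ => hC.pow _) PosDef.one
  · intro hW' j
    have hP : ((n : ℝ) • (1 : Matrix (Fin N) (Fin N) ℝ) - ∑ k ∈ Finset.range n, C ^ k).PosSemidef := by
      have : (n : ℝ) • (1 : Matrix (Fin N) (Fin N) ℝ) - ∑ k ∈ Finset.range n, C ^ k
          = ∑ k ∈ Finset.range n, (1 - C ^ k) := by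
        simp [Finset.sum_sub_distrib, Nat.cast_smul_eq_nsmul]
      rw [this]
      exact posSemidef_sum _ fun k _ => aux_one_sub _ C hB hC hCB k
    have h1 := hP.dotProduct_mulVec_nonneg (hW'.eigenvectorBasis j).ofLp
    have h2 := hW'.mulVec_eigenvectorBasis j
    have h3 : (hW'.eigenvectorBasis j).ofLp ⬝ᵥ (hW'.eigenvectorBasis j).ofLp = 1 := by
      have := hW'.eigenvectorBasis.inner_eq_one j
      rw [EuclideanSpace.inner_eq_star_dotProduct, star_trivial] at this
      exact this
    rw [sub_mulVec, h2, smul_mulVec, one_mulVec, ← sub_smul, dotProduct_smul] at h1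
    simp only [star_trivial, h3, smul_eq_mul, mul_one] at h1
    linarith
end

section
/- Let A ∈ ℝ^{M×N}, η > 0, and W_n = Σ_{i=1}^{n} C(n,i)(−1)^{i−1}(η AᵀA)^{i−1}. If v ∈ ℝ^N is an eigenvector of AᵀA with eigenvalue μ, then v is an eigenvector of W_n with eigenvalue (1 − (1 − η μ)^n)/(η μ) when μ ≠ 0, and with eigenvalue n when μ = 0. -/
open Matrix Finset

/-- If `v` is an eigenvector of `AᵀA` with eigenvalue `μ`, then `v` is an
eigenvector of `W_n = ∑_{i=1}^n C(n,i) (-1)^{i-1} (η AᵀA)^{i-1}` with eigenvalue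
`(1 - (1 - ημ)^n)/(ημ)` when `μ ≠ 0`, and with eigenvalue `n` when `μ = 0`. -/
theorem stmt5 {M N : ℕ} (A : Matrix (Fin M) (Fin N) ℝ) (η : ℝ) (hη : 0 < η) (n : ℕ)
    (v : Fin N → ℝ) (hv : v ≠ 0) (μ : ℝ)
    (heig : (Aᵀ * A).mulVec v = μ • v) :
    (μ ≠ 0 → (∑ i ∈ Finset.Icc 1 n,
        ((n.choose i : ℝ) * (-1) ^ (i - 1)) • (η • (Aᵀ * A)) ^ (i - 1)).mulVec v
          = ((1 - (1 - η * μ) ^ n) / (η * μ)) • v)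
    ∧ (μ = 0 → (∑ i ∈ Finset.Icc 1 n,
        ((n.choose i : ℝ) * (-1) ^ (i - 1)) • (η • (Aᵀ * A)) ^ (i - 1)).mulVec v
          = (n : ℝ) • v) := by
  have hpow : ∀ k : ℕ, ((η • (Aᵀ * A)) ^ k).mulVec v = (η * μ) ^ k • v := by
    intro k
    induction k with
    | zero => simp
    | succ k ih =>
      rw [pow_succ, ← Matrix.mulVec_mulVec, Matrix.smul_mulVec, heig, smul_smul,
        Matrix.mulVec_smul, ih, smul_smul, pow_succ, mul_comm]
  have hsum : (∑ i ∈ Finset.Icc 1 n,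
        ((n.choose i : ℝ) * (-1) ^ (i - 1)) • (η • (Aᵀ * A)) ^ (i - 1)).mulVec v
      = (∑ i ∈ Finset.range n, ((n.choose (i + 1) : ℝ) * (-1) ^ i) * (η * μ) ^ i) • v := by
    have hI : Finset.Icc 1 n = Finset.Ico 1 (n + 1) := by ext; simp
    rw [hI, Finset.sum_Ico_eq_sum_range, Matrix.sum_mulVec, Finset.sum_smul]
    refine Finset.sum_congr (by simp) fun i _ => ?_
    rw [Matrix.smul_mulVec, hpow, smul_smul, Nat.add_comm 1 i, Nat.add_sub_cancel]
  rw [hsum]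
  constructor
  · intro hμ
    have hx : η * μ ≠ 0 := mul_ne_zero hη.ne' hμ
    congr 1
    rw [eq_div_iff hx]
    have hb := add_pow (-(η * μ)) 1 n
    rw [Finset.sum_range_succ'] at hb
    have h1 : 1 - η * μ = -(η * μ) + 1 := by ring
    rw [h1, hb, Finset.sum_mul]
    simp only [one_pow, mul_one, pow_zero, Nat.choose_zero_right, Nat.cast_one]
    rw [← sub_sub, sub_right_comm, sub_self, zero_sub, ← Finset.sum_neg_distrib]
    refine Finset.sum_congr rfl fun i _ => ?_
    rw [neg_pow (η * μ)]
    ring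
  · rintro rfl
    congr 1
    cases n with
    | zero => simp
    | succ n => simp [Finset.sum_range_succ']
end

section
/- Let A ∈ ℝ^{M×N}, b ∈ ℝ^M, λ > 0, p ≥ 1, η > 0, and let W be a symmetric positive definite N×N matrix such that (1/η) W⁻¹ − AᵀA is positive semidefinite. Define f(x) = (1/2)‖Ax − b‖₂², g(x) = λ‖x‖₁, F(x) = f(x) + g(x), and Q(x, z) = f(z) + (x − z)ᵀ∇f(z) + (1/(2η))‖x − z‖²_{W⁻¹} + p·g(x), where ‖u‖²_{W⁻¹} = uᵀ W⁻¹ u. Then for all x, z ∈ ℝ^N, Q(x, z) ≥ F(x). -/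
open Matrix Finset

/-- Least-squares data-fit term `f(x) = (1/2)‖Ax - b‖₂²`. -/
noncomputable def lsq {M N : ℕ} (A : Matrix (Fin M) (Fin N) ℝ) (b : Fin M → ℝ)
    (x : Fin N → ℝ) : ℝ :=
  (1 / 2 : ℝ) * ((A.mulVec x - b) ⬝ᵥ (A.mulVec x - b))

/-- ℓ₁ regularizer `g(x) = λ‖x‖₁`. -/
noncomputable def l1reg {N : ℕ} (lam : ℝ) (x : Fin N → ℝ) : ℝ :=
  lam * ∑ i, |x i|

/-- EFISTA majorizer
`Q(x,z) = f(z) + (x-z)ᵀ∇f(z) + (1/(2η))‖x-z‖²_{W⁻¹} + p·g(x)`. -/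
noncomputable def efistaQ {M N : ℕ} (A : Matrix (Fin M) (Fin N) ℝ) (b : Fin M → ℝ)
    (lam p η : ℝ) (W : Matrix (Fin N) (Fin N) ℝ) (x z : Fin N → ℝ) : ℝ :=
  lsq A b z + (x - z) ⬝ᵥ Aᵀ.mulVec (A.mulVec z - b)
    + (1 / (2 * η)) * ((x - z) ⬝ᵥ W⁻¹.mulVec (x - z)) + p * l1reg lam x

/-- If `W` is symmetric positive definite and `(1/η)W⁻¹ - AᵀA` is positive
semidefinite, `λ > 0`, `p ≥ 1`, `η > 0`, then the EFISTA majorizer dominates the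
regularized objective: `Q(x,z) ≥ F(x)` for all `x, z`. -/
theorem stmt10 {M N : ℕ} (A : Matrix (Fin M) (Fin N) ℝ) (b : Fin M → ℝ)
    (lam p η : ℝ) (hlam : 0 < lam) (hp : 1 ≤ p) (hη : 0 < η)
    (W : Matrix (Fin N) (Fin N) ℝ) (hW : W.PosDef)
    (hcurv : (η⁻¹ • W⁻¹ - Aᵀ * A).PosSemidef) :
    ∀ x z : Fin N → ℝ, lsq A b x + l1reg lam x ≤ efistaQ A b lam p η W x z := by
  intro x z
  obtain ⟨u, rfl⟩ : ∃ u, x = z + u := ⟨x - z, by simp⟩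
  have hpsd := hcurv.dotProduct_mulVec_nonneg u
  have hAA : u ⬝ᵥ (Aᵀ * A).mulVec u = A.mulVec u ⬝ᵥ A.mulVec u := by
    rw [← Matrix.mulVec_mulVec, Matrix.dotProduct_mulVec, Matrix.vecMul_transpose]
  have hlin : u ⬝ᵥ Aᵀ.mulVec (A.mulVec z - b) = A.mulVec u ⬝ᵥ (A.mulVec z - b) := by
    rw [Matrix.dotProduct_mulVec, Matrix.vecMul_transpose]
  simp only [star_trivial, Matrix.sub_mulVec, Matrix.smul_mulVec, dotProduct_sub,
    dotProduct_smul, smul_eq_mul] at hpsd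
  rw [hAA] at hpsd
  have hexp : lsq A b (z + u) = lsq A b z + A.mulVec u ⬝ᵥ (A.mulVec z - b)
      + (1 / 2) * (A.mulVec u ⬝ᵥ A.mulVec u) := by
    have h : A.mulVec (z + u) - b = (A.mulVec z - b) + A.mulVec u := by
      rw [Matrix.mulVec_add]; abel
    unfold lsq
    rw [h, add_dotProduct, dotProduct_add, dotProduct_add,
      dotProduct_comm (A.mulVec z - b) (A.mulVec u)]
    ring
  have hg : 0 ≤ l1reg lam (z + u) :=
    mul_nonneg hlam.le (Finset.sum_nonneg fun i _ => abs_nonneg _)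
  have hpg : l1reg lam (z + u) ≤ p * l1reg lam (z + u) := le_mul_of_one_le_left hg hp
  have hc : (1 / (2 * η)) * (u ⬝ᵥ W⁻¹.mulVec u)
      = (1 / 2) * (η⁻¹ * (u ⬝ᵥ W⁻¹.mulVec u)) := by
    field_simp
  unfold efistaQ
  rw [add_sub_cancel_left, hlin, hexp, hc]
  linarith
end
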